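/- arXiv:math/0009081 — 3 statements merged into one kernel-verified Lean document; each statement's English description precedes it below -/
import Mathlib

section
/- There is a group isomorphism between Λ/F(Λ) and the group of continuous group homomorphisms from F⁻¹(Λ̂)/Λ̂ to the circle ℝ/ℤ, where F⁻¹(Λ̂)/Λ̂ carries the subspace topology inside the torus t/Λ̂. -/
open scoped RealInnerProductSpace

theorem aux_lift {V : Type*} [NormedAddCommGroup V] [NormedSpace ℝ V]
    (g : V →+ AddCircle (1:ℝ)) (hg : Continuous g) :
    ∃ f : V →ₗ[ℝ] ℝ, ∀ x, ((f x : ℝ) : AddCircle (1:ℝ)) = g x := by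
  have cov := AddCircle.isCoveringMap_coe (1:ℝ)
  obtain ⟨f, ⟨hf0, hf⟩, -⟩ := cov.existsUnique_continuousMap_lifts ⟨g, hg⟩ (0:V) (0:ℝ) (by simp)
  have hf' : ∀ x, ((f x : ℝ) : AddCircle (1:ℝ)) = g x := fun x => congrFun hf x
  have hadd : ∀ x y, f (x + y) = f x + f y := by
    have : (fun p : V × V => f (p.1 + p.2)) = (fun p : V × V => f p.1 + f p.2) := by
      refine cov.eq_of_comp_eq (by fun_prop) (by fun_prop) ?_ (0 : V × V) (by simp [hf0])
      funext p
      simp [hf']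
    exact fun x y => congrFun this (x, y)
  refine ⟨((AddMonoidHom.mk' f hadd).toRealLinearMap f.continuous : V →L[ℝ] ℝ), fun x => ?_⟩
  exact hf' x

theorem aux_basis {t : Type*} [NormedAddCommGroup t] [InnerProductSpace ℝ t]
    [FiniteDimensional ℝ t] (M : Submodule ℤ t) [DiscreteTopology M] :
    ∃ (n : ℕ) (b : Module.Basis (Fin n) ℤ M), LinearIndependent ℝ (fun i => (b i : t)) := by
  refine ⟨_, Module.finBasis ℤ M, ?_⟩
  set b := Module.finBasis ℤ M
  have hs : Submodule.span ℤ (Set.range fun i => (b i : t)) = M := by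
    have := congrArg (Submodule.map M.subtype) b.span_eq
    rw [Submodule.map_span, ← Set.range_comp, Submodule.map_top, Submodule.range_subtype] at this
    exact this
  rw [linearIndependent_iff_card_eq_finrank_span,
    Real.finrank_eq_int_finrank_of_discrete (by rw [hs]; infer_instance)]
  rw [Fintype.card_fin, Set.finrank]
  exact (congrArg (fun N : Submodule ℤ t => Module.finrank ℤ N) hs).symm

theorem aux_ext {t : Type*} [NormedAddCommGroup t] [InnerProductSpace ℝ t]
    [FiniteDimensional ℝ t] {n : ℕ} {v : Fin n → t} (hv : LinearIndependent ℝ v) (c : Fin n → ℝ) :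
    ∃ x : t, ∀ i, ⟪x, v i⟫ = c i := by
  obtain ⟨f, hf⟩ := LinearMap.exists_extend ((Module.Basis.span hv).constr ℝ c)
  refine ⟨(InnerProductSpace.toDual ℝ t).symm (LinearMap.toContinuousLinearMap f), fun i => ?_⟩
  rw [InnerProductSpace.toDual_symm_apply]
  have := LinearMap.congr_fun hf (Module.Basis.span hv i)
  rw [Module.Basis.constr_basis] at this
  rw [← this]
  simp [Module.Basis.span_apply]

theorem aux_dd {t : Type*} [NormedAddCommGroup t] [InnerProductSpace ℝ t]
    [FiniteDimensional ℝ t] (M : Submodule ℤ t) [DiscreteTopology M] (l : t)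
    (h : ∀ x : t, (∀ m ∈ M, ∃ n : ℤ, ⟪x, m⟫ = (n : ℝ)) → ∃ n : ℤ, ⟪x, l⟫ = (n : ℝ)) : l ∈ M := by
  obtain ⟨n, b, hb⟩ := aux_basis M
  have hM : ∀ m ∈ M, ∃ a : Fin n → ℤ, m = ∑ i, a i • (b i : t) := fun m hm => by
    refine ⟨b.repr ⟨m, hm⟩, ?_⟩
    have := congrArg M.subtype (b.sum_repr ⟨m, hm⟩)
    rw [map_sum] at this
    exact this.symm
  have hint : ∀ x : t, (∀ i, ∃ n : ℤ, ⟪x, (b i : t)⟫ = (n:ℝ)) → ∃ n : ℤ, ⟪x, l⟫ = (n : ℝ) := by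
    intro x hx
    choose k hk using hx
    refine h x fun m hm => ?_
    obtain ⟨a, rfl⟩ := hM m hm
    refine ⟨∑ i, a i * k i, ?_⟩
    simp only [inner_sum, ← Int.cast_smul_eq_zsmul ℝ, inner_smul_right, hk]
    push_cast; rfl
  have hl : l ∈ Submodule.span ℝ (Set.range fun i => (b i : t)) := by
    rw [← Submodule.orthogonal_orthogonal (Submodule.span ℝ (Set.range fun i => (b i : t))),
      Submodule.mem_orthogonal]
    intro u hu
    have hu' : ∀ i, ⟪u, (b i : t)⟫ = 0 := fun i =>
      (Submodule.mem_orthogonal' _ _).1 hu _ (Submodule.subset_span ⟨i, rfl⟩)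
    by_contra hne
    obtain ⟨k, hk⟩ := hint ((2 * ⟪u, l⟫)⁻¹ • u) (fun i => ⟨0, by simp [inner_smul_left, hu']⟩)
    rw [inner_smul_left] at hk
    have : (2 * (k:ℝ)) = 1 := by rw [← hk]; simp; field_simp
    have : 2 * k = 1 := by exact_mod_cast this
    omega
  obtain ⟨c, rfl⟩ := (Submodule.mem_span_range_iff_exists_fun ℝ).1 hl
  refine Submodule.sum_mem _ fun i _ => ?_
  obtain ⟨x, hx⟩ := aux_ext hb (Pi.single i 1)
  obtain ⟨k, hk⟩ := hint x (fun j => ⟨Pi.single (M := fun _ => ℤ) i 1 j, by rw [hx]; by_cases h : j = i <;> simp [h]⟩)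
  have : c i = k := by
    rw [← hk]; simp [inner_sum, inner_smul_right, hx, Pi.single_apply]
  rw [this, Int.cast_smul_eq_zsmul]
  exact M.smul_mem _ (b i).2

theorem aux_disc {t : Type*} [NormedAddCommGroup t] [InnerProductSpace ℝ t]
    [FiniteDimensional ℝ t]
    (Λ : Submodule ℤ t) [DiscreteTopology Λ]
    (hspan : Submodule.span ℝ (Λ : Set t) = ⊤)
    (Λhat : Submodule ℤ t)
    (hΛhat : ∀ x : t, x ∈ Λhat ↔ ∀ l ∈ Λ, ∃ n : ℤ, ⟪x, l⟫ = (n : ℝ)) : DiscreteTopology Λhat := by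
  obtain ⟨n, b, hb⟩ := aux_basis Λ
  have hs : Submodule.span ℤ (Set.range fun i => (b i : t)) = Λ := by
    have := congrArg (Submodule.map Λ.subtype) b.span_eq
    rw [Submodule.map_span, ← Set.range_comp, Submodule.map_top, Submodule.range_subtype] at this
    exact this
  have hs' : Submodule.span ℝ (Set.range fun i => (b i : t)) = ⊤ := by
    rw [← Submodule.span_span_of_tower (R := ℤ), hs, hspan]
  have hopen : IsOpen {x : Λhat | ∀ i, |⟪(x : t), (b i : t)⟫| < 1} := by
    simp only [Set.ofPred_forall]
    exact isOpen_iInter_of_finite fun i => isOpen_lt (by fun_prop) continuous_const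
  have : {x : Λhat | ∀ i, |⟪(x : t), (b i : t)⟫| < 1} = {0} := by
    ext x
    simp only [Set.mem_ofPred_eq, Set.mem_singleton_iff]
    constructor
    · intro h
      have h0 : ∀ i, ⟪(x : t), (b i : t)⟫ = 0 := fun i => by
        obtain ⟨k, hk⟩ := (hΛhat x).1 x.2 _ (b i).2
        have := h i
        rw [hk] at this ⊢
        have : |k| < 1 := by exact_mod_cast this
        rw [Int.abs_lt_one_iff] at this
        simp [this]
      have : (x : t) ∈ (Submodule.span ℝ (Set.range fun i => (b i : t)))ᗮ := by
        rw [Submodule.mem_orthogonal']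
        intro u hu
        induction hu using Submodule.span_induction with
        | mem u hu => obtain ⟨i, rfl⟩ := hu; exact h0 i
        | zero => simp
        | add u v _ _ h1 h2 => simp [inner_add_right, h1, h2]
        | smul a u _ h1 => simp [inner_smul_right, h1]
      rw [hs'] at this
      simpa using this
    · rintro rfl; simp
  rw [this] at hopen
  exact discreteTopology_of_isOpen_singleton_zero hopen

theorem aux_surj {t : Type*} [NormedAddCommGroup t] [InnerProductSpace ℝ t]
    [FiniteDimensional ℝ t] (F : t →ₗ[ℝ] t)
    (Λhat : Submodule ℤ t) [DiscreteTopology Λhat]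
    (χ : (Λhat.toAddSubgroup.comap F.toAddMonoidHom) →+ AddCircle (1:ℝ)) (hχ : Continuous χ) :
    ∃ y : t, ∀ x : (Λhat.toAddSubgroup.comap F.toAddMonoidHom),
      ((⟪(x : t), y⟫ : ℝ) : AddCircle (1:ℝ)) = χ x := by
  have hker : ∀ x : LinearMap.ker F, (x : t) ∈ Λhat.toAddSubgroup.comap F.toAddMonoidHom := by
    intro x
    have : F x = 0 := x.2
    change F x ∈ Λhat
    rw [this]; exact zero_mem _
  let ι : LinearMap.ker F →+ (Λhat.toAddSubgroup.comap F.toAddMonoidHom) :=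
    AddMonoidHom.mk' (fun x => ⟨x, hker x⟩) (fun x y => rfl)
  have hι : Continuous ι := Continuous.subtype_mk continuous_subtype_val _
  obtain ⟨f0, hf0⟩ := aux_lift (χ.comp ι) (hχ.comp hι)
  obtain ⟨f1, hf1⟩ := LinearMap.exists_extend f0
  let D : Submodule ℤ t := Λhat ⊓ (LinearMap.range F).restrictScalars ℤ
  have hD : DiscreteTopology D := DiscreteTopology.of_subset (s := (Λhat : Set t)) inferInstance
    (fun x hx => hx.1)
  obtain ⟨n, b, hb⟩ := aux_basis D
  have hw : ∀ i, ∃ w : (Λhat.toAddSubgroup.comap F.toAddMonoidHom), F w = b i := fun i => by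
    obtain ⟨w, hw⟩ := (b i).2.2
    refine ⟨⟨w, ?_⟩, hw⟩
    change F w ∈ Λhat
    rw [hw]; exact (b i).2.1
  choose w hw using hw
  choose r hr using fun i => QuotientAddGroup.mk_surjective (χ (w i))
  obtain ⟨z, hz⟩ := aux_ext hb (fun i => r i - f1 (w i))
  let f : t →ₗ[ℝ] ℝ := f1 + (innerₛₗ ℝ z) ∘ₗ F
  have hfw : ∀ i, f (w i) = r i := fun i => by
    simp [f, hw, hz]
  refine ⟨(InnerProductSpace.toDual ℝ t).symm (LinearMap.toContinuousLinearMap f), fun x => ?_⟩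
  rw [real_inner_comm, InnerProductSpace.toDual_symm_apply]
  change ((f x : ℝ) : AddCircle (1:ℝ)) = χ x
  let φ : (Λhat.toAddSubgroup.comap F.toAddMonoidHom) →+ AddCircle (1:ℝ) :=
    ((QuotientAddGroup.mk' _).comp f.toAddMonoidHom).comp (AddSubgroup.subtype _)
  change φ x = χ x
  have hφw : ∀ i, φ (w i) = χ (w i) := fun i => by
    rw [← hr]
    change ((f (w i) : ℝ) : AddCircle (1:ℝ)) = _
    rw [hfw]
  have hφk : ∀ k, φ (ι k) = χ (ι k) := fun k => by
    change ((f k : ℝ) : AddCircle (1:ℝ)) = (χ.comp ι) k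
    rw [← hf0, ← hf1]
    have : F k = 0 := k.2
    simp [f, this]
  have hFx : F x ∈ D := ⟨x.2, ⟨x, rfl⟩⟩
  let a := b.repr ⟨F x, hFx⟩
  have ha : ∑ i, a i • (b i : t) = F x := by
    have := congrArg D.subtype (b.sum_repr ⟨F x, hFx⟩)
    rw [map_sum] at this
    exact this
  have hk : ((x - ∑ i, a i • w i : (Λhat.toAddSubgroup.comap F.toAddMonoidHom)) : t)
      ∈ LinearMap.ker F := by
    rw [LinearMap.mem_ker]
    simp only [AddSubgroup.coe_sub, AddSubgroup.val_finsetSum, AddSubgroup.coe_zsmul, map_sub, map_sum, map_zsmul, hw, ha, sub_self]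
  have hx : x = ι ⟨_, hk⟩ + ∑ i, a i • w i := by
    apply Subtype.ext
    simp [ι]
  rw [hx]
  simp only [map_add, map_sum, map_zsmul, hφw, hφk]

/-- There is a group isomorphism between `Λ/F(Λ)` and the group of
continuous group homomorphisms from `F⁻¹(Λ̂)/Λ̂` (with the subspace topology inside the
torus `t/Λ̂`) to the circle `ℝ/ℤ`. -/
theorem stmt_5 {t : Type*} [NormedAddCommGroup t] [InnerProductSpace ℝ t]
    [FiniteDimensional ℝ t]
    (Λ : Submodule ℤ t) [DiscreteTopology Λ]
    (hspan : Submodule.span ℝ (Λ : Set t) = ⊤)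
    (L : t ≃ₗᵢ[ℝ] t) (hL : ⇑L '' (Λ : Set t) = (Λ : Set t))
    (F : t →ₗ[ℝ] t) (hF : ∀ x, F x = L x - x)
    (Λhat : Submodule ℤ t)
    (hΛhat : ∀ x : t, x ∈ Λhat ↔ ∀ l ∈ Λ, ∃ n : ℤ, ⟪x, l⟫ = (n : ℝ)) :
    Nonempty
      ((Λ.toAddSubgroup ⧸
          (AddSubgroup.map F.toAddMonoidHom Λ.toAddSubgroup).addSubgroupOf Λ.toAddSubgroup) ≃+
        ContinuousAddMonoidHom
          (AddSubgroup.map (QuotientAddGroup.mk' Λhat.toAddSubgroup)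
            (Λhat.toAddSubgroup.comap F.toAddMonoidHom))
          (AddCircle (1 : ℝ))) := by
  have hdisc := aux_disc Λ hspan Λhat hΛhat
  have hLmem : ∀ l ∈ Λ, L l ∈ Λ := fun l hl => by
    have : L l ∈ (Λ : Set t) := hL ▸ ⟨l, hl, rfl⟩
    exact this
  have hLsurj : ∀ l ∈ Λ, ∃ m ∈ Λ, L m = l := fun l hl => by
    have : l ∈ ⇑L '' (Λ : Set t) := hL.symm ▸ hl
    exact this
  have hadj : ∀ x m, ⟪F x, L m⟫ = - ⟪x, F m⟫ := fun x m => by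
    simp only [hF, inner_sub_left, inner_sub_right, L.inner_map_map]; ring
  have hint : ∀ r : ℝ, ((r : ℝ) : AddCircle (1:ℝ)) = 0 ↔ ∃ n : ℤ, r = n := fun r => by
    rw [AddCircle.coe_eq_zero_iff]
    simp [eq_comm]
  -- H is the dual of F(Λ)
  have hH : ∀ x : t, F x ∈ Λhat ↔ ∀ l ∈ Λ, ∃ n : ℤ, ⟪x, F l⟫ = (n : ℝ) := fun x => by
    rw [hΛhat]
    constructor
    · intro h l hl
      obtain ⟨n, hn⟩ := h _ (hLmem l hl)
      rw [hadj] at hn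
      exact ⟨-n, by push_cast; linarith⟩
    · intro h l hl
      obtain ⟨m, hm, rfl⟩ := hLsurj l hl
      obtain ⟨n, hn⟩ := h m hm
      exact ⟨-n, by rw [hadj, hn]; push_cast; rfl⟩
  let ψ : t → t →+ AddCircle (1:ℝ) := fun l =>
    (QuotientAddGroup.mk' _).comp (innerₛₗ ℝ l).toAddMonoidHom
  have hψ : ∀ l x, ψ l x = ((⟪x, l⟫ : ℝ) : AddCircle (1:ℝ)) := fun l x => by
    rw [real_inner_comm]; rfl
  have hψc : ∀ l, Continuous (ψ l) := fun l => by
    have : (ψ l : t → AddCircle (1:ℝ)) = fun x => ((⟪x, l⟫ : ℝ) : AddCircle (1:ℝ)) :=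
      funext (hψ l)
    rw [this]
    exact (AddCircle.continuous_mk' 1).comp (by fun_prop)
  have hψ0 : ∀ l : Λ.toAddSubgroup, Λhat.toAddSubgroup ≤ (ψ l).ker := fun l x hx => by
    rw [AddMonoidHom.mem_ker, hψ, hint]
    exact (hΛhat x).1 hx l l.2
  let K := AddSubgroup.map (QuotientAddGroup.mk' Λhat.toAddSubgroup)
            (Λhat.toAddSubgroup.comap F.toAddMonoidHom)
  let Φ0 : Λ.toAddSubgroup → ContinuousAddMonoidHom K (AddCircle (1:ℝ)) := fun l =>
    { toAddMonoidHom := (QuotientAddGroup.lift _ (ψ l) (hψ0 l)).comp K.subtype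
      continuous_toFun := by
        have : Continuous (QuotientAddGroup.lift _ (ψ l) (hψ0 l)) :=
          continuous_quot_lift _ (hψc l)
        exact this.comp continuous_subtype_val }
  have hKmem : ∀ x : (Λhat.toAddSubgroup.comap F.toAddMonoidHom),
      QuotientAddGroup.mk' Λhat.toAddSubgroup x ∈ K := fun x => ⟨x, x.2, rfl⟩
  have hΦ0 : ∀ l x, Φ0 l ⟨_, hKmem x⟩ = ((⟪(x:t), (l:t)⟫ : ℝ) : AddCircle (1:ℝ)) := fun l x =>
    hψ l x
  have hext : ∀ χ χ' : ContinuousAddMonoidHom K (AddCircle (1:ℝ)),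
      (∀ x, χ ⟨_, hKmem x⟩ = χ' ⟨_, hKmem x⟩) → χ = χ' := fun χ χ' h => by
    ext k
    obtain ⟨_, x, hx, rfl⟩ := k
    exact h ⟨x, hx⟩
  let Φ : Λ.toAddSubgroup →+ ContinuousAddMonoidHom K (AddCircle (1:ℝ)) :=
    AddMonoidHom.mk' Φ0 (fun l m => by
      apply hext
      intro x
      rw [ContinuousAddMonoidHom.add_apply, hΦ0, hΦ0, hΦ0]
      simp [inner_add_right])
  have hsurj : Function.Surjective Φ := by
    intro χ
    let q : (Λhat.toAddSubgroup.comap F.toAddMonoidHom) →+ K :=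
      AddMonoidHom.mk' (fun x => ⟨_, hKmem x⟩) (fun x y => rfl)
    have hq : Continuous q :=
      Continuous.subtype_mk (continuous_quot_mk.comp continuous_subtype_val) _
    obtain ⟨y, hy⟩ := aux_surj F Λhat (χ.toAddMonoidHom.comp q) (χ.continuous_toFun.comp hq)
    have hyΛ : y ∈ Λ := by
      apply aux_dd
      intro x hx
      have hx' := (hΛhat x).2 hx
      have hFx : F x ∈ Λhat := (hH x).2 fun l hl => by
        rw [hF]; exact hx _ (sub_mem (hLmem l hl) hl)
      rw [← hint]
      rw [hy ⟨x, hFx⟩]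
      have : q ⟨x, hFx⟩ = 0 := Subtype.ext ((QuotientAddGroup.eq_zero_iff x).2 hx')
      simp [this]
    refine ⟨⟨y, hyΛ⟩, hext _ _ fun x => ?_⟩
    exact (hΦ0 _ x).trans (hy x)
  have hker : (AddSubgroup.map F.toAddMonoidHom Λ.toAddSubgroup).addSubgroupOf Λ.toAddSubgroup
      = Φ.ker := by
    let M : Submodule ℤ t := Λ.map (F.restrictScalars ℤ)
    have hM : DiscreteTopology M := DiscreteTopology.of_subset (s := (Λ : Set t)) inferInstance
      (by
        rintro _ ⟨l, hl, rfl⟩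
        change F l ∈ Λ
        rw [hF]; exact sub_mem (hLmem l hl) hl)
    ext l
    rw [AddSubgroup.mem_addSubgroupOf, AddMonoidHom.mem_ker]
    constructor
    · rintro ⟨m, hm, hml⟩
      refine hext _ _ fun x => ?_
      refine (hΦ0 l x).trans ((hint _).2 ?_)
      rw [← hml]
      exact (hH x).1 x.2 m hm
    · intro h
      have : (l : t) ∈ M := by
        apply aux_dd
        intro x hx
        have hFx : F x ∈ Λhat := (hH x).2 fun l hl => hx _ ⟨l, hl, rfl⟩
        rw [← hint]
        rw [← hΦ0 l ⟨x, hFx⟩]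
        exact DFunLike.congr_fun h _
      obtain ⟨m, hm, hml⟩ := this
      exact ⟨m, hm, hml⟩
  exact ⟨(QuotientAddGroup.quotientAddEquivOfEq hker).trans
    (QuotientAddGroup.quotientKerEquivOfSurjective Φ hsurj)⟩
end

section
/- The finite abelian group Tor(Λ/F(Λ)) is isomorphic to the group Hom(Tor(Λ̂/F(Λ̂)), ℚ/ℤ) of homomorphisms from Tor(Λ̂/F(Λ̂)) to ℚ/ℤ; in particular, the finite abelian groups Tor(Λ/F(Λ)) and Tor(Λ̂/F(Λ̂)) are isomorphic. -/
open scoped RealInnerProductSpace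

theorem aux_roots (n : ℕ) [NeZero n] :
    HasEnoughRootsOfUnity (Multiplicative (AddCircle (1 : ℚ))) n := by
  have hn : (n : ℚ) ≠ 0 := Nat.cast_ne_zero.mpr (NeZero.ne n)
  have key : ∀ y : AddCircle (1 : ℚ), n • y = 0 →
      ∃ k : ℤ, k • (((1 / n : ℚ)) : AddCircle (1 : ℚ)) = y := by
    intro y hy
    induction y using QuotientAddGroup.induction_on with
    | H q =>
      rw [← AddCircle.coe_nsmul, AddCircle.coe_eq_zero_iff] at hy
      obtain ⟨k, hk⟩ := hy
      refine ⟨k, ?_⟩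
      rw [← AddCircle.coe_zsmul]
      congr 1
      simp only [zsmul_eq_mul, nsmul_eq_mul, mul_one] at hk ⊢
      rw [hk]; field_simp
  have ht : n • (((1 / n : ℚ)) : AddCircle (1 : ℚ)) = 0 := by
    rw [← AddCircle.coe_nsmul, AddCircle.coe_eq_zero_iff]
    exact ⟨1, by simp [hn]⟩
  refine ⟨⟨Multiplicative.ofAdd ((1 / n : ℚ) : AddCircle (1 : ℚ)), ?_, ?_⟩, ?_⟩
  · rw [← ofAdd_nsmul, ht]; rfl
  · intro l hl
    rw [← ofAdd_nsmul, ofAdd_eq_one, ← AddCircle.coe_nsmul, AddCircle.coe_eq_zero_iff] at hl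
    obtain ⟨k, hk⟩ := hl
    simp only [zsmul_eq_mul, nsmul_eq_mul, mul_one] at hk
    have : (k * n : ℚ) = l := by rw [hk]; field_simp
    have h2 : k * (n : ℤ) = l := by exact_mod_cast this
    exact Int.natCast_dvd_natCast.mp ⟨k, by rw [← h2]; ring⟩
  · have hu : (toUnits (Multiplicative.ofAdd ((1 / n : ℚ) : AddCircle (1 : ℚ)))) ∈
        rootsOfUnity n (Multiplicative (AddCircle (1 : ℚ))) := by
      rw [mem_rootsOfUnity, ← map_pow, ← ofAdd_nsmul, ht]; simp
    refine ⟨⟨_, hu⟩, ?_⟩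
    rintro ⟨x, hx⟩
    rw [mem_rootsOfUnity] at hx
    have hx' : n • (Multiplicative.toAdd (x : Multiplicative (AddCircle (1 : ℚ)))) = 0 := by
      rw [← toAdd_pow, ← Units.val_pow_eq_pow_val, hx]; rfl
    obtain ⟨k, hk⟩ := key _ hx'
    refine ⟨k, ?_⟩
    apply Subtype.ext
    apply Units.ext
    simp only [Subgroup.coe_zpow, ← map_zpow, val_toUnits_apply, ← ofAdd_zsmul, hk]
    rfl

theorem aux_dual (A : Type*) [AddCommGroup A] [Finite A] :
    Nonempty (A ≃+ (A →+ AddCircle (1 : ℚ))) := by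
  have : NeZero (Monoid.exponent (Multiplicative A)) :=
    ⟨Monoid.exponent_ne_zero_of_finite⟩
  have := aux_roots (Monoid.exponent (Multiplicative A))
  obtain ⟨e⟩ := CommGroup.monoidHom_mulEquiv_of_hasEnoughRootsOfUnity (Multiplicative A)
    (Multiplicative (AddCircle (1 : ℚ)))
  have e2 : (Multiplicative A →* (Multiplicative (AddCircle (1 : ℚ)))ˣ) ≃*
    (Multiplicative A →* (Multiplicative (AddCircle (1 : ℚ)))) :=
    (toUnits (G := Multiplicative (AddCircle (1 : ℚ)))).symm.monoidHomCongrRight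
  have e3 := e.symm.trans e2
  refine ⟨AddEquiv.mk' ((Multiplicative.ofAdd.trans e3.toEquiv).trans
    AddMonoidHom.toMultiplicative.symm) ?_⟩
  intro a b
  ext x
  simp

open Module in
theorem aux_smith {M : Type*} [AddCommGroup M] [Module.Free ℤ M] [Module.Finite ℤ M]
    (f : M →ₗ[ℤ] M) : ∃ e : M ≃ₗ[ℤ] Module.Dual ℤ M,
      (LinearMap.range f).map (e : M →ₗ[ℤ] Module.Dual ℤ M) = LinearMap.range f.dualMap := by
  classical
  let b := Free.chooseBasis ℤ M
  obtain ⟨n, snf⟩ := Submodule.smithNormalForm b (LinearMap.range f)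
  obtain ⟨s, hs⟩ := f.rangeRestrict.exists_rightInverse_of_surjective (LinearMap.range_rangeRestrict f)
  have hs' : ∀ y, f (s y) = y := fun y => by
    have := LinearMap.congr_fun hs y
    simpa using congrArg Subtype.val this
  let k := Free.chooseBasis ℤ (LinearMap.ker f)
  let g : (LinearMap.range f × LinearMap.ker f) →ₗ[ℤ] M :=
    s.coprod (LinearMap.ker f).subtype
  have hg : Function.Bijective g := by
    constructor
    · rw [injective_iff_map_eq_zero]
      rintro ⟨x, y⟩ h
      have h' : s x + y = 0 := h
      have h2 : x = 0 := by
        have := congrArg f h'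
        rw [map_add, hs', y.2] at this
        simpa using this
      subst h2
      simpa using h'
    · intro m
      refine ⟨(⟨f m, m, rfl⟩, ⟨m - s ⟨f m, m, rfl⟩, ?_⟩), ?_⟩
      · simp [hs']
      · simp [g]
  let G := LinearEquiv.ofBijective g hg
  let c := (snf.bN.prod k).map G
  have hcard := Fintype.card_congr (c.indexEquiv snf.bM)
  have hcard2 : Nonempty (Free.ChooseBasisIndex ℤ (LinearMap.ker f) ≃ ((Set.range snf.f)ᶜ : Set _)) := by
    rw [← Fintype.card_eq, Fintype.card_compl_set, Set.card_range_of_injective snf.f.injective]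
    simp at hcard ⊢
    omega
  obtain ⟨τ⟩ := hcard2
  let σ := ((Equiv.ofInjective snf.f snf.f.injective).sumCongr τ).trans (Equiv.Set.sumCompl _)
  let b' := snf.bM.reindex σ.symm
  let d : Fin n ⊕ Free.ChooseBasisIndex ℤ (LinearMap.ker f) → ℤ := Sum.elim snf.a 0
  have hd : ∀ i, f (c i) = d i • b' i := by
    rintro (i | i)
    · simp [c, G, g, d, b', σ, hs', snf.snf]
    · simp [c, G, g, d]
  refine ⟨b'.equiv c.dualBasis (Equiv.refl _), ?_⟩
  have hcomp : (b'.equiv c.dualBasis (Equiv.refl _)).toLinearMap ∘ₗ f =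
      f.dualMap ∘ₗ (c.equiv b'.dualBasis (Equiv.refl _)).toLinearMap := by
    refine c.ext fun i => c.ext fun j => ?_
    simp [hd, Finsupp.single_apply]
    by_cases h : i = j
    · simp [h]
    · simp [Ne.symm h]
  rw [← LinearMap.range_comp, hcomp, LinearMap.range_comp, LinearEquiv.range, Submodule.map_top]

theorem aux_tor {A B : Type*} [AddCommGroup A] [AddCommGroup B] (e : A ≃+ B) :
    Nonempty (AddCommGroup.torsion A ≃+ AddCommGroup.torsion B) := by
  have : (AddCommGroup.torsion A).map e.toAddMonoidHom = AddCommGroup.torsion B := by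
    ext x
    rw [AddSubgroup.mem_map_equiv]
    exact e.symm.injective.isOfFinAddOrder_iff (f := e.symm.toAddMonoidHom)
  exact ⟨(e.addSubgroupMap _).trans (AddEquiv.addSubgroupCongr this)⟩

theorem aux_fin {A : Type*} [AddCommGroup A] [Module.Finite ℤ A] :
    Finite (AddCommGroup.torsion A) := by
  have : Module.Finite ℤ (AddCommGroup.torsion A) :=
    inferInstanceAs (Module.Finite ℤ (AddSubgroup.toIntSubmodule (AddCommGroup.torsion A)))
  apply Module.finite_of_fg_torsion
  rintro ⟨x, hx⟩
  obtain ⟨n, hn, h⟩ := (isOfFinAddOrder_iff_nsmul_eq_zero).mp hx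
  refine ⟨⟨n, ?_⟩, ?_⟩
  · simp; omega
  · ext; simpa [Submonoid.smul_def] using h


/-- `Tor(Λ/F(Λ))` is isomorphic to `Hom(Tor(Λ̂/F(Λ̂)), ℚ/ℤ)`; in particular
the finite abelian groups `Tor(Λ/F(Λ))` and `Tor(Λ̂/F(Λ̂))` are isomorphic. -/
theorem stmt_7 {t : Type*} [NormedAddCommGroup t] [InnerProductSpace ℝ t]
    [FiniteDimensional ℝ t]
    (Λ : Submodule ℤ t) [DiscreteTopology Λ]
    (hspan : Submodule.span ℝ (Λ : Set t) = ⊤)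
    (L : t ≃ₗᵢ[ℝ] t) (hL : ⇑L '' (Λ : Set t) = (Λ : Set t))
    (F : t →ₗ[ℝ] t) (hF : ∀ x, F x = L x - x)
    (Λhat : Submodule ℤ t)
    (hΛhat : ∀ x : t, x ∈ Λhat ↔ ∀ l ∈ Λ, ∃ n : ℤ, ⟪x, l⟫ = (n : ℝ)) :
    Nonempty
      ((AddCommGroup.torsion
          (Λ.toAddSubgroup ⧸
            (AddSubgroup.map F.toAddMonoidHom Λ.toAddSubgroup).addSubgroupOf
              Λ.toAddSubgroup)) ≃+
        ((AddCommGroup.torsion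
            (Λhat.toAddSubgroup ⧸
              (AddSubgroup.map F.toAddMonoidHom Λhat.toAddSubgroup).addSubgroupOf
                Λhat.toAddSubgroup)) →+ AddCircle (1 : ℚ))) ∧
    Nonempty
      ((AddCommGroup.torsion
          (Λ.toAddSubgroup ⧸
            (AddSubgroup.map F.toAddMonoidHom Λ.toAddSubgroup).addSubgroupOf
              Λ.toAddSubgroup)) ≃+
        (AddCommGroup.torsion
          (Λhat.toAddSubgroup ⧸
            (AddSubgroup.map F.toAddMonoidHom Λhat.toAddSubgroup).addSubgroupOf
              Λhat.toAddSubgroup))) := by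
  have hLat : IsZLattice ℝ Λ := ⟨hspan⟩
  have hMF : Module.Finite ℤ Λ := ZLattice.module_finite ℝ Λ
  have hFr : Module.Free ℤ Λ := ZLattice.module_free ℝ Λ
  have hLm : ∀ x ∈ Λ, L x ∈ Λ := fun x hx => by
    have : L x ∈ (Λ : Set t) := hL ▸ ⟨x, hx, rfl⟩
    exact this
  have hLs : ∀ x ∈ Λ, L.symm x ∈ Λ := fun x hx => by
    have : x ∈ ⇑L '' (Λ : Set t) := hL.symm ▸ hx
    obtain ⟨y, hy, rfl⟩ := this
    simpa using hy
  have hadj : ∀ x y, ⟪L x, y⟫ = ⟪x, L.symm y⟫ := fun x y => by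
    rw [← L.inner_map_map x (L.symm y), L.apply_symm_apply]
  have hFm : ∀ x ∈ Λ, F x ∈ Λ := fun x hx => by
    rw [hF]; exact Λ.sub_mem (hLm x hx) hx
  have hFh : ∀ x ∈ Λhat, F x ∈ Λhat := fun x hx => by
    rw [hF]; refine Λhat.sub_mem ?_ hx
    rw [hΛhat] at hx ⊢
    intro l hl
    rw [hadj]
    exact hx _ (hLs l hl)
  let f : Λ →ₗ[ℤ] Λ := (F.restrictScalars ℤ).restrict hFm
  let g : Λhat →ₗ[ℤ] Λhat := (F.restrictScalars ℤ).restrict hFh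
  let ℓ : Λ ≃ₗ[ℤ] Λ :=
    { toFun := fun x => ⟨L.symm x, hLs x x.2⟩
      invFun := fun x => ⟨L x, hLm x x.2⟩
      map_add' := fun x y => by ext; simp
      map_smul' := fun n x => by ext; simp
      left_inv := fun x => by ext; simp
      right_inv := fun x => by ext; simp }
  have hch : ∀ (x : Λhat) (l : Λ), ∃ n : ℤ, ⟪(x : t), (l : t)⟫ = (n : ℝ) :=
    fun x l => (hΛhat x).mp x.2 l l.2
  choose p hp using hch
  let D₀ : Λhat →ₗ[ℤ] Module.Dual ℤ Λ := AddMonoidHom.toIntLinearMap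
    { toFun := fun x => AddMonoidHom.toIntLinearMap
        { toFun := fun l => p x l
          map_zero' := by
            have := hp x 0
            simp only [ZeroMemClass.coe_zero, inner_zero_right] at this
            exact_mod_cast this.symm
          map_add' := fun l m => by
            have : ((p x (l + m) : ℤ) : ℝ) = ((p x l + p x m : ℤ) : ℝ) := by
              push_cast
              rw [← hp, ← hp, ← hp, Submodule.coe_add, inner_add_right]
            exact_mod_cast this }
      map_zero' := by
        ext l
        have := hp 0 l
        simp only [ZeroMemClass.coe_zero, inner_zero_left] at this
        exact_mod_cast this.symm
      map_add' := fun x y => by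
        ext l
        have : ((p (x + y) l : ℤ) : ℝ) = ((p x l + p y l : ℤ) : ℝ) := by
          push_cast
          rw [← hp, ← hp, ← hp, Submodule.coe_add, inner_add_left]
        exact_mod_cast this }
  have hD₀ : ∀ (x : Λhat) (l : Λ), ((D₀ x l : ℤ) : ℝ) = ⟪(x : t), (l : t)⟫ :=
    fun x l => (hp x l).symm
  have hbij : Function.Bijective D₀ := by
    constructor
    · rw [injective_iff_map_eq_zero]
      intro x hx
      have h0 : ∀ l ∈ Λ, ⟪(x : t), l⟫ = 0 := fun l hl => by
        rw [← hD₀ x ⟨l, hl⟩, hx]; simp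
      have h1 : ∀ l ∈ Submodule.span ℝ (Λ : Set t), ⟪(x : t), l⟫ = 0 := fun l hl => by
        induction hl using Submodule.span_induction with
        | mem y hy => exact h0 y hy
        | zero => simp
        | add y z _ _ hy hz => rw [inner_add_right, hy, hz, add_zero]
        | smul a y _ hy => rw [inner_smul_right, hy, mul_zero]
      have h2 := h1 (x : t) (hspan ▸ Submodule.mem_top)
      exact Subtype.ext (inner_self_eq_zero.mp h2)
    · intro φ
      let b := Module.Free.chooseBasis ℤ Λ
      let B := b.ofZLatticeBasis ℝ Λ
      let ψ : t →ₗ[ℝ] ℝ := B.constr ℝ (fun i => ((φ (b i) : ℤ) : ℝ))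
      have hψ : ∀ l : Λ, ψ l = φ l := by
        have : (ψ.restrictScalars ℤ) ∘ₗ Λ.subtype =
            (Algebra.linearMap ℤ ℝ) ∘ₗ φ := by
          refine b.ext fun i => ?_
          have h : ((b i : Λ) : t) = B i := (b.ofZLatticeBasis_apply ℝ Λ i).symm
          simp [h, ψ]
        intro l
        simpa using LinearMap.congr_fun this l
      let x : t := (InnerProductSpace.toDual ℝ t).symm (LinearMap.toContinuousLinearMap ψ)
      have hx : ∀ y, ⟪x, y⟫ = ψ y := fun y => by
        simp [x]
      have hxm : x ∈ Λhat := (hΛhat x).mpr fun l hl => ⟨φ ⟨l, hl⟩, by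
        rw [hx]; exact hψ ⟨l, hl⟩⟩
      refine ⟨⟨x, hxm⟩, ?_⟩
      ext l
      have : ((D₀ ⟨x, hxm⟩ l : ℤ) : ℝ) = (φ l : ℤ) := by
        rw [hD₀, hx, hψ]
      exact_mod_cast this
  let D := LinearEquiv.ofBijective D₀ hbij
  have hrange : (LinearMap.range g).map D.toLinearMap = LinearMap.range f.dualMap := by
    have hcomp : D.toLinearMap ∘ₗ g =
        f.dualMap ∘ₗ (D.trans (ℓ.dualMap.trans (LinearEquiv.neg ℤ))).toLinearMap := by
      ext x l
      have : ((D₀ (g x) l : ℤ) : ℝ) = ((-(D₀ x (ℓ (f l))) : ℤ) : ℝ) := by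
        push_cast
        rw [hD₀, hD₀]
        change ⟪F x, (l : t)⟫ = -⟪(x : t), L.symm (F l)⟫
        rw [hF, hF, map_sub, L.symm_apply_apply, inner_sub_left, inner_sub_right, hadj]
        ring
      exact_mod_cast this
    rw [← LinearMap.range_comp, hcomp, LinearMap.range_comp, LinearEquiv.range, Submodule.map_top]
  obtain ⟨e, he⟩ := aux_smith f
  let E : Λ ≃ₗ[ℤ] Λhat := e.trans D.symm
  have hE : ∀ x, x ∈ LinearMap.range f ↔ E x ∈ LinearMap.range g := by
    intro x
    have h1 : x ∈ LinearMap.range f ↔ e x ∈ LinearMap.range f.dualMap := by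
      rw [← he]; simp
    have h2 : E x ∈ LinearMap.range g ↔ D (E x) ∈ LinearMap.range f.dualMap := by
      rw [← hrange]; simp
    rw [h1, h2]; simp [E]
  have hQ1 : ∀ x : Λ, x ∈ (AddSubgroup.map F.toAddMonoidHom Λ.toAddSubgroup).addSubgroupOf
      Λ.toAddSubgroup ↔ x ∈ LinearMap.range f := by
    intro x
    constructor
    · rintro ⟨y, hy, h⟩
      exact ⟨⟨y, hy⟩, Subtype.ext h⟩
    · rintro ⟨y, rfl⟩
      exact ⟨y, y.2, rfl⟩
  have hQ2 : ∀ x : Λhat, x ∈ (AddSubgroup.map F.toAddMonoidHom Λhat.toAddSubgroup).addSubgroupOf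
      Λhat.toAddSubgroup ↔ x ∈ LinearMap.range g := by
    intro x
    constructor
    · rintro ⟨y, hy, h⟩
      exact ⟨⟨y, hy⟩, Subtype.ext h⟩
    · rintro ⟨y, rfl⟩
      exact ⟨y, y.2, rfl⟩
  let E' : Λ.toAddSubgroup ≃+ Λhat.toAddSubgroup := E.toAddEquiv
  have hmap : ((AddSubgroup.map F.toAddMonoidHom Λ.toAddSubgroup).addSubgroupOf
      Λ.toAddSubgroup).map (E' : Λ.toAddSubgroup →+ Λhat.toAddSubgroup) =
      (AddSubgroup.map F.toAddMonoidHom Λhat.toAddSubgroup).addSubgroupOf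
      Λhat.toAddSubgroup := by
    ext y
    constructor
    · rintro ⟨x, hx, rfl⟩
      exact (hQ2 _).mpr ((hE x).mp ((hQ1 x).mp hx))
    · intro hy
      refine ⟨E'.symm y, (hQ1 _).mpr ((hE _).mpr ?_), E'.apply_symm_apply y⟩
      have : E (E'.symm y) = y := E'.apply_symm_apply y
      rw [this]
      exact (hQ2 y).mp hy
  obtain ⟨T⟩ := aux_tor (QuotientAddGroup.congr _ _ E' hmap)
  have hMFh : Module.Finite ℤ Λhat.toAddSubgroup := Module.Finite.equiv E
  have hfin : Module.Finite ℤ (Λhat.toAddSubgroup ⧸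
      (AddSubgroup.map F.toAddMonoidHom Λhat.toAddSubgroup).addSubgroupOf
        Λhat.toAddSubgroup) :=
    Module.Finite.of_surjective (QuotientAddGroup.mk' ((AddSubgroup.map F.toAddMonoidHom
      Λhat.toAddSubgroup).addSubgroupOf Λhat.toAddSubgroup)).toIntLinearMap
      (QuotientAddGroup.mk'_surjective _)
  have hfin2 := aux_fin (A := (Λhat.toAddSubgroup ⧸
      (AddSubgroup.map F.toAddMonoidHom Λhat.toAddSubgroup).addSubgroupOf
        Λhat.toAddSubgroup))
  obtain ⟨U⟩ := aux_dual (AddCommGroup.torsion (Λhat.toAddSubgroup ⧸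
      (AddSubgroup.map F.toAddMonoidHom Λhat.toAddSubgroup).addSubgroupOf
        Λhat.toAddSubgroup))
  exact ⟨⟨T.trans U⟩, ⟨T⟩⟩
end

section
/- The group of connected components of F⁻¹(Λ̂)/Λ̂ (with the subspace topology inside the torus t/Λ̂) is isomorphic to the group of homomorphisms from the group of connected components of F⁻¹(Λ)/Λ (with the subspace topology inside the torus t/Λ) to ℚ/ℤ; in particular these two component groups are finite abelian groups of the same cardinality. -/
open scoped RealInnerProductSpace

noncomputable def ratToReal : AddCircle (1:ℚ) →+ AddCircle (1:ℝ) :=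
  QuotientAddGroup.map _ _ (Rat.castHom ℝ).toAddMonoidHom (by
    intro x hx
    obtain ⟨n, rfl⟩ := AddSubgroup.mem_zmultiples_iff.1 hx
    exact AddSubgroup.mem_zmultiples_iff.2 ⟨n, by simp⟩)

lemma ratToReal_coe (q : ℚ) : ratToReal (q : AddCircle (1:ℚ)) = ((q : ℝ) : AddCircle (1:ℝ)) := rfl

lemma ratToReal_inj : Function.Injective ratToReal := by
  rw [injective_iff_map_eq_zero]
  intro a
  induction a using QuotientAddGroup.induction_on with
  | H q =>
    intro h
    rw [ratToReal_coe, AddCircle.coe_eq_zero_iff] at h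
    obtain ⟨n, hn⟩ := h
    rw [AddCircle.coe_eq_zero_iff]
    refine ⟨n, ?_⟩
    have : ((n:ℚ):ℝ) = q := by simpa using hn
    have h2 : (n:ℚ) = q := by exact_mod_cast this
    simpa using h2

lemma ratToReal_range (a : AddCircle (1:ℝ)) (n : ℕ) (hn : n ≠ 0) (h : n • a = 0) :
    ∃ q, ratToReal q = a := by
  induction a using QuotientAddGroup.induction_on with
  | H r =>
    have h' : ((n • r : ℝ) : AddCircle (1:ℝ)) = 0 := h
    rw [AddCircle.coe_eq_zero_iff] at h'
    obtain ⟨m, hm⟩ := h'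
    refine ⟨((m / n : ℚ) : AddCircle (1:ℚ)), ?_⟩
    rw [ratToReal_coe]
    congr 1
    have : (n:ℝ) ≠ 0 := by exact_mod_cast hn
    push_cast
    rw [div_eq_iff this]
    simp at hm
    rw [hm]; ring

lemma homEquiv (C : Type*) [AddCommGroup C] [Finite C] :
    Nonempty ((C →+ AddCircle (1:ℚ)) ≃+ (C →+ AddCircle (1:ℝ))) := by
  refine ⟨AddEquiv.ofBijective (AddMonoidHom.compHom ratToReal) ⟨?_, ?_⟩⟩
  · intro f g h
    ext c
    exact ratToReal_inj (DFunLike.congr_fun h c)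
  · intro f
    have key : ∀ c, ∃ q, ratToReal q = f c := fun c =>
      ratToReal_range (f c) (Nat.card C) Nat.card_pos.ne' (by rw [← map_nsmul]; simp)
    choose g hg using key
    refine ⟨AddMonoidHom.mk' g ?_, ?_⟩
    · intro a b
      apply ratToReal_inj
      simp [hg]
    · ext c
      exact hg c

lemma card_hom_le (C : Type*) [AddCommGroup C] [Finite C] :
    Finite (C →+ AddCircle (1:ℝ)) ∧ Nat.card (C →+ AddCircle (1:ℝ)) ≤ Nat.card C := by
  classical
  cases nonempty_fintype C
  let φ : (C →+ AddCircle (1:ℝ)) → AddChar C ℂ := fun f =>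
    (Circle.coeHom.compAddChar (AddCircle.toCircle_addChar (T := 1))).compAddMonoidHom f
  have hφ : Function.Injective φ := by
    intro f g h
    ext c
    have := DFunLike.congr_fun h c
    exact AddCircle.injective_toCircle one_ne_zero (Subtype.ext this)
  refine ⟨Finite.of_injective φ hφ, ?_⟩
  refine (Nat.card_le_card_of_injective φ hφ).trans ?_
  rw [Nat.card_eq_fintype_card, Nat.card_eq_fintype_card]
  exact AddChar.card_addChar_le _ _

lemma lift_inj {P Q A C : Type*} [AddCommGroup P] [AddCommGroup Q] [AddCommGroup A]
    [AddCommGroup C] (p : P →+ A) (hp : Function.Surjective p) (q : Q →+ C)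
    (hq : Function.Surjective q) (B : P →+ Q →+ AddCircle (1:ℝ))
    (hpB : ∀ x, p x = 0 ↔ ∀ y, B x y = 0) (hqB : ∀ y, q y = 0 → ∀ x, B x y = 0) :
    ∃ f : A →+ (C →+ AddCircle (1:ℝ)), Function.Injective f := by
  have h1 : ∀ x, ∃ g : C →+ AddCircle (1:ℝ), ∀ y, g (q y) = B x y := fun x =>
    ⟨AddMonoidHom.liftOfSurjective q hq ⟨B x, fun y hy => hqB y hy x⟩,
      fun y => AddMonoidHom.liftOfRightInverse_comp_apply _ _ _ _ _⟩
  choose g hg using h1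
  let G : P →+ (C →+ AddCircle (1:ℝ)) := AddMonoidHom.mk' g (by
    intro a b
    ext c
    obtain ⟨y, rfl⟩ := hq c
    simp [hg])
  have hG : ∀ x, G x = 0 ↔ p x = 0 := by
    intro x
    rw [hpB]
    constructor
    · intro h y
      rw [← hg]; exact DFunLike.congr_fun h (q y)
    · intro h
      ext c
      obtain ⟨y, rfl⟩ := hq c
      exact (hg x y).trans (h y)
  refine ⟨AddMonoidHom.liftOfSurjective p hp ⟨G, fun x hx => (hG x).2 hx⟩, ?_⟩
  rw [injective_iff_map_eq_zero]
  intro a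
  obtain ⟨x, rfl⟩ := hp a
  intro h
  have := AddMonoidHom.liftOfRightInverse_comp_apply p _ (Function.rightInverse_surjInv hp) ⟨G, fun x hx => (hG x).2 hx⟩ x
  exact (hG x).1 (this.symm.trans h)

lemma duality {P Q A C : Type*} [AddCommGroup P] [AddCommGroup Q] [AddCommGroup A]
    [AddCommGroup C] [Finite A] [Finite C] (p : P →+ A) (hp : Function.Surjective p) (q : Q →+ C)
    (hq : Function.Surjective q) (B : P →+ Q →+ AddCircle (1:ℝ))
    (hpB : ∀ x, p x = 0 ↔ ∀ y, B x y = 0) (hqB : ∀ y, q y = 0 ↔ ∀ x, B x y = 0) :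
    Nonempty (A ≃+ (C →+ AddCircle (1:ℚ))) ∧ Nat.card A = Nat.card C := by
  obtain ⟨f, hf⟩ := lift_inj p hp q hq B hpB (fun y hy => (hqB y).1 hy)
  obtain ⟨g, hg⟩ := lift_inj q hq p hp B.flip hqB (fun y hy => (hpB y).1 hy)
  obtain ⟨fA, hA⟩ := card_hom_le A
  obtain ⟨fC, hC⟩ := card_hom_le C
  have h1 := Nat.card_le_card_of_injective f hf
  have h2 := Nat.card_le_card_of_injective g hg
  obtain ⟨e⟩ := homEquiv C
  have hb : Function.Bijective f := by
    rw [Nat.bijective_iff_injective_and_card]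
    exact ⟨hf, by omega⟩
  exact ⟨⟨(AddEquiv.ofBijective f hb).trans e.symm⟩, by omega⟩

lemma comp_hom {t : Type*} [NormedAddCommGroup t] [InnerProductSpace ℝ t]
    [FiniteDimensional ℝ t]
    (Λ : Submodule ℤ t) [DiscreteTopology Λ]
    (hspan : Submodule.span ℝ (Λ : Set t) = ⊤)
    (F : t →ₗ[ℝ] t) (hF : ∀ x ∈ Λ, F x ∈ Λ)
    (N : AddSubgroup (AddSubgroup.map (QuotientAddGroup.mk' Λ.toAddSubgroup)
        (Λ.toAddSubgroup.comap F.toAddMonoidHom)))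
    (hN : (N : Set (AddSubgroup.map (QuotientAddGroup.mk' Λ.toAddSubgroup)
        (Λ.toAddSubgroup.comap F.toAddMonoidHom))) = connectedComponent 0) :
    Finite ((AddSubgroup.map (QuotientAddGroup.mk' Λ.toAddSubgroup)
        (Λ.toAddSubgroup.comap F.toAddMonoidHom)) ⧸ N) ∧
    ∃ q : (Λ.toAddSubgroup.comap F.toAddMonoidHom) →+
      ((AddSubgroup.map (QuotientAddGroup.mk' Λ.toAddSubgroup)
        (Λ.toAddSubgroup.comap F.toAddMonoidHom)) ⧸ N), Function.Surjective q ∧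
      ∀ y, q y = 0 ↔ ∃ k : t, F k = 0 ∧ (y : t) - k ∈ Λ := by
  let Y := Λ.toAddSubgroup.comap F.toAddMonoidHom
  let G := AddSubgroup.map (QuotientAddGroup.mk' Λ.toAddSubgroup) Y
  have memY : ∀ x, x ∈ Y ↔ F x ∈ Λ := fun x => Iff.rfl
  have hFc : Continuous F := F.continuous_of_finiteDimensional
  let π : Y →+ G := (QuotientAddGroup.mk' Λ.toAddSubgroup).addSubgroupMap Y
  have hπ : Function.Surjective π := AddMonoidHom.addSubgroupMap_surjective _ _
  have hπc : ∀ y : Y, ((π y : G) : t ⧸ Λ.toAddSubgroup) = QuotientAddGroup.mk (y : t) :=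
    fun y => rfl
  -- the subgroup image of ker F
  let K : AddSubgroup Y := F.toAddMonoidHom.ker.comap Y.subtype
  let H : AddSubgroup G := K.map π
  have memK : ∀ y : Y, y ∈ K ↔ F y = 0 := fun y => Iff.rfl
  have memH : ∀ y : Y, π y ∈ H ↔ ∃ k : t, F k = 0 ∧ (y : t) - k ∈ Λ := by
    intro y
    constructor
    · rintro ⟨k, hk, hky⟩
      refine ⟨k, hk, ?_⟩
      have h2 := congrArg (Subtype.val) hky
      rw [hπc, hπc, QuotientAddGroup.eq] at h2
      have : -(k:t) + y ∈ Λ := h2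
      rwa [neg_add_eq_sub] at this
    · rintro ⟨k, hk, hky⟩
      refine ⟨⟨k, by rw [memY, hk]; exact Λ.zero_mem⟩, hk, ?_⟩
      apply Subtype.ext
      rw [hπc, hπc, QuotientAddGroup.eq]
      change -(k:t) + y ∈ Λ
      rwa [neg_add_eq_sub]
  -- H is open
  have hHo : IsOpen (H : Set G) := by
    apply AddSubgroup.isOpen_of_mem_nhds (g := 0)
    have hd : IsOpen ({0} : Set Λ) := isOpen_discrete _
    obtain ⟨V, hV, hV0⟩ := isOpen_induced_iff.1 hd
    have h0V : (0:t) ∈ V := by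
      have : (0:Λ) ∈ Subtype.val ⁻¹' V := by rw [hV0]; rfl
      exact this
    have hU : IsOpen ((QuotientAddGroup.mk : t → t ⧸ Λ.toAddSubgroup) '' (F ⁻¹' V)) :=
      QuotientAddGroup.isOpenMap_coe _ (hV.preimage hFc)
    have hU' : IsOpen ((Subtype.val : G → t ⧸ Λ.toAddSubgroup) ⁻¹'
      ((QuotientAddGroup.mk : t → t ⧸ Λ.toAddSubgroup) '' (F ⁻¹' V))) :=
      hU.preimage continuous_subtype_val
    refine Filter.mem_of_superset (hU'.mem_nhds ?_) ?_
    · exact ⟨0, by simpa using h0V, rfl⟩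
    · rintro g ⟨u, huV, hug⟩
      obtain ⟨y, rfl⟩ := hπ g
      rw [hπc, QuotientAddGroup.eq] at hug
      have hug : -u + y ∈ Λ := hug
      have hFu : F u ∈ Λ := by
        have h1 := hF _ hug
        have h2 := (memY y).1 y.2
        rw [map_add, map_neg] at h1
        have := Λ.sub_mem h2 h1
        simpa using this
      have h3 : (⟨F u, hFu⟩ : Λ) ∈ Subtype.val ⁻¹' V := huV
      rw [hV0] at h3
      have h4 : F u = 0 := congrArg Subtype.val h3
      exact (memH y).2 ⟨u, h4, by rwa [neg_add_eq_sub] at hug⟩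
  have hNH : N = H := by
    apply SetLike.coe_injective
    rw [hN]
    apply Set.Subset.antisymm
    · have : IsClopen (H : Set G) := ⟨AddSubgroup.isClosed_of_isOpen H hHo, hHo⟩
      exact this.connectedComponent_subset H.zero_mem
    · let j : LinearMap.ker F → G := fun k => π ⟨k, by
        rw [memY, LinearMap.mem_ker.1 k.2]; exact Λ.zero_mem⟩
      have hj : Continuous j := by
        apply Continuous.subtype_mk
        exact continuous_quotient_mk'.comp continuous_subtype_val
      have hjr : IsPreconnected (Set.range j) := isPreconnected_range hj
      have h0 : (0:G) ∈ Set.range j := ⟨0, rfl⟩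
      have hs := hjr.subset_connectedComponent h0
      rintro _ ⟨k, hk, rfl⟩
      exact hs ⟨⟨k, hk⟩, rfl⟩
  let q : Y →+ G ⧸ N := (QuotientAddGroup.mk' N).comp π
  have hq : Function.Surjective q := (QuotientAddGroup.mk'_surjective N).comp hπ
  have hq0 : ∀ y, q y = 0 ↔ ∃ k : t, F k = 0 ∧ (y : t) - k ∈ Λ := by
    intro y
    rw [← memH, ← hNH]
    exact QuotientAddGroup.eq_zero_iff _
  refine ⟨?_, q, hq, hq0⟩
  have : IsZLattice ℝ Λ := ⟨hspan⟩
  let b := (Module.Free.chooseBasis ℤ Λ).ofZLatticeBasis ℝ Λ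
  have hb : Submodule.span ℤ (Set.range b) = Λ := Module.Basis.ofZLatticeBasis_span ℝ Λ _
  obtain ⟨R, hR⟩ : ∃ R, ∀ x, ‖ZSpan.fract b x‖ ≤ R := ⟨_, ZSpan.norm_fract_le b⟩
  have hSfin : ((F '' Metric.closedBall 0 R) ∩ Λ).Finite := by
    have hc : IsCompact (F '' Metric.closedBall 0 R) := (isCompact_closedBall 0 R).image hFc
    have := ZSpan.setFinite_inter b hc.isBounded
    rw [hb] at this
    exact this
  have hch : ∀ a : G ⧸ N, ∃ y : Y, q y = a ∧ F y ∈ (F '' Metric.closedBall 0 R) ∩ Λ := by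
    intro a
    obtain ⟨y, rfl⟩ := hq a
    have hfl : (ZSpan.floor b (y:t) : t) ∈ Λ := by
      exact hb.le (ZSpan.floor b (y:t)).2
    have hfr : F (ZSpan.fract b (y:t)) ∈ Λ := by
      rw [ZSpan.fract_apply, map_sub]
      exact Λ.sub_mem ((memY _).1 y.2) (hF _ hfl)
    refine ⟨⟨ZSpan.fract b (y:t), hfr⟩, ?_, ⟨_, by simpa using hR y, rfl⟩, hfr⟩
    rw [← sub_eq_zero, ← map_sub, hq0]
    refine ⟨0, map_zero _, ?_⟩
    change ZSpan.fract b (y:t) - (y:t) - 0 ∈ Λ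
    rw [ZSpan.fract_apply]
    simpa using hfl
  choose s hs hsF using hch
  have := hSfin.to_subtype
  refine Finite.of_injective (β := ↥((F '' Metric.closedBall 0 R) ∩ (Λ : Set t)))
    (fun a => ⟨F (s a), hsF a⟩) ?_
  intro a a' h
  have h : F (s a) = F (s a') := congrArg Subtype.val h
  rw [← hs a, ← hs a', ← sub_eq_zero, ← map_sub, hq0]
  exact ⟨(s a : t) - s a', by rw [map_sub, h, sub_self], by simp⟩

lemma dual_props {t : Type*} [NormedAddCommGroup t] [InnerProductSpace ℝ t]
    [FiniteDimensional ℝ t]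
    (Λ : Submodule ℤ t) [DiscreteTopology Λ]
    (hspan : Submodule.span ℝ (Λ : Set t) = ⊤)
    (Λhat : Submodule ℤ t)
    (hΛhat : ∀ x : t, x ∈ Λhat ↔ ∀ l ∈ Λ, ∃ n : ℤ, ⟪x, l⟫ = (n : ℝ)) :
    DiscreteTopology Λhat ∧ Submodule.span ℝ (Λhat : Set t) = ⊤ ∧
    (∀ x : t, x ∈ Λ ↔ ∀ l ∈ Λhat, ∃ n : ℤ, ⟪x, l⟫ = (n : ℝ)) := by
  classical
  have : IsZLattice ℝ Λ := ⟨hspan⟩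
  let b := (Module.Free.chooseBasis ℤ Λ).ofZLatticeBasis ℝ Λ
  have hb : Submodule.span ℤ (Set.range b) = Λ := Module.Basis.ofZLatticeBasis_span ℝ Λ _
  let B : LinearMap.BilinForm ℝ t := innerₗ t
  have hsymm : B.IsSymm := ⟨fun x y => real_inner_comm _ _⟩
  have hB : B.Nondegenerate := by
    constructor
    · intro x hx
      exact inner_self_eq_zero.1 (hx x)
    · intro x hx
      exact inner_self_eq_zero.1 (hx x)
  have hmem : ∀ (M : Submodule ℤ t) (x : t), x ∈ B.dualSubmodule M ↔
      ∀ l ∈ M, ∃ n : ℤ, ⟪x, l⟫ = (n : ℝ) := by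
    intro M x
    rw [LinearMap.BilinForm.mem_dualSubmodule]
    refine forall₂_congr fun l _ => ?_
    rw [Submodule.mem_one]
    refine exists_congr fun n => ?_
    simp [B, eq_comm]
  have h1 : Λhat = B.dualSubmodule Λ := by
    ext x
    rw [hΛhat, hmem]
  have h2 : B.dualSubmodule Λ = Submodule.span ℤ (Set.range (B.dualBasis hB b)) := by
    have h := LinearMap.BilinForm.dualSubmodule_span_of_basis (R := ℤ) B hB b
    rw [hb] at h
    exact h
  refine ⟨?_, ?_, ?_⟩
  · rw [h1, h2]; infer_instance
  · rw [h1, h2]; exact ZSpan.span_top _ 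
  · intro x
    rw [← hmem, h1]
    have := LinearMap.BilinForm.dualSubmodule_dualSubmodule_of_basis (R := ℤ) B hB hsymm b
    rw [hb] at this
    rw [this]

lemma nondeg {t : Type*} [NormedAddCommGroup t] [InnerProductSpace ℝ t]
    [FiniteDimensional ℝ t]
    (Λ : Submodule ℤ t) [DiscreteTopology Λ]
    (hspan : Submodule.span ℝ (Λ : Set t) = ⊤)
    (F : t →ₗ[ℝ] t) (hF : ∀ x ∈ Λ, F x ∈ Λ)
    (hFF : ∀ x y, ⟪x, F y⟫ + ⟪F x, y⟫ + ⟪F x, F y⟫ = 0)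
    (Λhat : Submodule ℤ t)
    (hΛhat : ∀ x : t, x ∈ Λhat ↔ ∀ l ∈ Λ, ∃ n : ℤ, ⟪x, l⟫ = (n : ℝ))
    (x : t) (hx : ∀ y, F y ∈ Λ → ∃ n : ℤ, ⟪x, F y⟫ = (n : ℝ)) :
    ∃ k : t, F k = 0 ∧ x - k ∈ Λhat := by
  classical
  have : IsZLattice ℝ Λ := ⟨hspan⟩
  let b₀ := Module.Free.chooseBasis ℤ Λ
  let b := b₀.ofZLatticeBasis ℝ Λ
  have hb : ∀ i, b i = b₀ i := fun i => Module.Basis.ofZLatticeBasis_apply ℝ Λ b₀ i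
  let P : Submodule ℤ Λ := ((LinearMap.range F).restrictScalars ℤ).comap Λ.subtype
  have memP : ∀ m : Λ, m ∈ P ↔ ∃ y, F y = m := fun m => Iff.rfl
  have htf : Module.IsTorsionFree ℤ (Λ ⧸ P) := by
    rw [Module.isTorsionFree_iff_smul_eq_zero]
    intro n a
    induction a using Submodule.Quotient.induction_on with
    | H m =>
      intro h
      rw [← Submodule.Quotient.mk_smul, Submodule.Quotient.mk_eq_zero, memP] at h
      obtain ⟨y, hy⟩ := h
      by_cases hn : n = 0
      · exact Or.inl hn
      · right
        rw [Submodule.Quotient.mk_eq_zero, memP]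
        refine ⟨(n:ℝ)⁻¹ • y, ?_⟩
        rw [map_smul, hy, inv_smul_eq_iff₀ (by exact_mod_cast hn)]
        simp [Int.cast_smul_eq_zsmul]
  have hfree : Module.Free ℤ (Λ ⧸ P) := inferInstance
  obtain ⟨s, hs⟩ := Module.projective_lifting_property P.mkQ LinearMap.id P.mkQ_surjective
  have hs' : ∀ a, P.mkQ (s a) = a := fun a => DFunLike.congr_fun hs a
  -- real linear functional
  let φ : t →ₗ[ℝ] ℝ := b.constr ℝ (fun i => ⟪x, ((b₀ i - s (P.mkQ (b₀ i)) : Λ) : t)⟫)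
  let x' : t := (InnerProductSpace.toDual ℝ t).symm (LinearMap.toContinuousLinearMap φ)
  have hx' : ∀ y, ⟪x', y⟫ = φ y := fun y => by
    simp [x']
  have hφ : ∀ m : Λ, φ m = ⟪x, ((m - s (P.mkQ m) : Λ) : t)⟫ := by
    let f₁ : Λ →+ ℝ := φ.toAddMonoidHom.comp Λ.subtype.toAddMonoidHom
    let f₂ : Λ →+ ℝ := (innerₗ t x).toAddMonoidHom.comp
      (Λ.subtype.toAddMonoidHom.comp (LinearMap.id - s.comp P.mkQ).toAddMonoidHom)
    have : f₁.toIntLinearMap = f₂.toIntLinearMap := by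
      apply b₀.ext
      intro i
      change φ (b₀ i) = ⟪x, ((b₀ i - s (P.mkQ (b₀ i)) : Λ) : t)⟫
      rw [← hb, Module.Basis.constr_basis]
    exact fun m => DFunLike.congr_fun this m
  have hz : ∀ m : Λ, m ∈ P → ⟪x - x', (m:t)⟫ = 0 := by
    intro m hm
    have : P.mkQ m = 0 := by simpa using hm
    rw [inner_sub_left, hx', hφ, this]
    simp
  have hz2 : ∀ y, ⟪x - x', F y⟫ = 0 := by
    intro y
    have hy : y ∈ Submodule.span ℝ (Λ : Set t) := by rw [hspan]; trivial
    induction hy using Submodule.span_induction with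
    | mem y hy => exact hz ⟨F y, hF y hy⟩ ⟨y, rfl⟩
    | zero => simp
    | add a b _ _ ha hb => rw [map_add, inner_add_right, ha, hb, add_zero]
    | smul c a _ ha => rw [map_smul, inner_smul_right, ha, mul_zero]
  refine ⟨x - x', ?_, ?_⟩
  · have h1 := hFF (x - x') (x - x')
    have h2 := hz2 (x - x')
    have h3 := real_inner_comm (x - x') (F (x - x'))
    rw [h2] at h1 h3
    rw [← inner_self_eq_zero (𝕜 := ℝ)]
    linarith
  · rw [sub_sub_cancel, hΛhat]
    intro l hl
    rw [hx', hφ ⟨l, hl⟩]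
    have hp : (⟨l, hl⟩ - s (P.mkQ ⟨l, hl⟩) : Λ) ∈ P := by
      rw [← Submodule.Quotient.mk_eq_zero]
      change P.mkQ _ = 0
      rw [map_sub, hs', sub_self]
    obtain ⟨y, hy⟩ := (memP _).1 hp
    rw [← hy]
    exact hx y (by rw [hy]; exact Subtype.property _)

lemma pairing_zero {t : Type*} [NormedAddCommGroup t] [InnerProductSpace ℝ t]
    [FiniteDimensional ℝ t]
    (Λ : Submodule ℤ t) [DiscreteTopology Λ]
    (hspan : Submodule.span ℝ (Λ : Set t) = ⊤)
    (F : t →ₗ[ℝ] t) (hF : ∀ x ∈ Λ, F x ∈ Λ)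
    (hFF : ∀ x y, ⟪x, F y⟫ + ⟪F x, y⟫ + ⟪F x, F y⟫ = 0)
    (Λhat : Submodule ℤ t)
    (hΛhat : ∀ x : t, x ∈ Λhat ↔ ∀ l ∈ Λ, ∃ n : ℤ, ⟪x, l⟫ = (n : ℝ)) (x : t) :
    (∃ k : t, F k = 0 ∧ x - k ∈ Λhat) ↔ ∀ y, F y ∈ Λ → ∃ n : ℤ, ⟪x, F y⟫ = (n : ℝ) := by
  refine ⟨?_, nondeg Λ hspan F hF hFF Λhat hΛhat x⟩
  rintro ⟨k, hk, hkx⟩ y hy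
  obtain ⟨n, hn⟩ := (hΛhat _).1 hkx _ hy
  refine ⟨n, ?_⟩
  have := hFF k y
  rw [hk] at this
  simp at this
  rw [← hn, inner_sub_left, this, sub_zero]

/-- The group of connected components of `F⁻¹(Λ̂)/Λ̂` (subspace topology in
the torus `t/Λ̂`) is isomorphic to the group of homomorphisms from the group of connected
components of `F⁻¹(Λ)/Λ` to `ℚ/ℤ`; in particular these two component groups are finite
abelian groups of the same cardinality.  (The group of connected components of a topological
group is its quotient by the connected component of the identity, here represented by the
subgroups `N` and `Nhat`.) -/
theorem stmt_8 {t : Type*} [NormedAddCommGroup t] [InnerProductSpace ℝ t]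
    [FiniteDimensional ℝ t]
    (Λ : Submodule ℤ t) [DiscreteTopology Λ]
    (hspan : Submodule.span ℝ (Λ : Set t) = ⊤)
    (L : t ≃ₗᵢ[ℝ] t) (hL : ⇑L '' (Λ : Set t) = (Λ : Set t))
    (F : t →ₗ[ℝ] t) (hF : ∀ x, F x = L x - x)
    (Λhat : Submodule ℤ t)
    (hΛhat : ∀ x : t, x ∈ Λhat ↔ ∀ l ∈ Λ, ∃ n : ℤ, ⟪x, l⟫ = (n : ℝ))
    (N : AddSubgroup (AddSubgroup.map (QuotientAddGroup.mk' Λ.toAddSubgroup)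
        (Λ.toAddSubgroup.comap F.toAddMonoidHom)))
    (hN : (N : Set (AddSubgroup.map (QuotientAddGroup.mk' Λ.toAddSubgroup)
        (Λ.toAddSubgroup.comap F.toAddMonoidHom))) = connectedComponent 0)
    (Nhat : AddSubgroup (AddSubgroup.map (QuotientAddGroup.mk' Λhat.toAddSubgroup)
        (Λhat.toAddSubgroup.comap F.toAddMonoidHom)))
    (hNhat : (Nhat : Set (AddSubgroup.map (QuotientAddGroup.mk' Λhat.toAddSubgroup)
        (Λhat.toAddSubgroup.comap F.toAddMonoidHom))) = connectedComponent 0) :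
    Nonempty
      (((AddSubgroup.map (QuotientAddGroup.mk' Λhat.toAddSubgroup)
          (Λhat.toAddSubgroup.comap F.toAddMonoidHom)) ⧸ Nhat) ≃+
        (((AddSubgroup.map (QuotientAddGroup.mk' Λ.toAddSubgroup)
          (Λ.toAddSubgroup.comap F.toAddMonoidHom)) ⧸ N) →+ AddCircle (1 : ℚ))) ∧
    Finite ((AddSubgroup.map (QuotientAddGroup.mk' Λhat.toAddSubgroup)
        (Λhat.toAddSubgroup.comap F.toAddMonoidHom)) ⧸ Nhat) ∧
    Finite ((AddSubgroup.map (QuotientAddGroup.mk' Λ.toAddSubgroup)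
        (Λ.toAddSubgroup.comap F.toAddMonoidHom)) ⧸ N) ∧
    Nat.card ((AddSubgroup.map (QuotientAddGroup.mk' Λhat.toAddSubgroup)
        (Λhat.toAddSubgroup.comap F.toAddMonoidHom)) ⧸ Nhat) =
      Nat.card ((AddSubgroup.map (QuotientAddGroup.mk' Λ.toAddSubgroup)
        (Λ.toAddSubgroup.comap F.toAddMonoidHom)) ⧸ N) := by
  obtain ⟨hdisc, hspan', hΛ⟩ := dual_props Λ hspan Λhat hΛhat
  have hFF : ∀ x y, ⟪x, F y⟫ + ⟪F x, y⟫ + ⟪F x, F y⟫ = 0 := by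
    intro x y
    have h := L.inner_map_map x y
    rw [hF, hF]
    simp only [inner_sub_left, inner_sub_right]
    linarith
  have hF1 : ∀ x ∈ Λ, F x ∈ Λ := by
    intro x hx
    rw [hF]
    refine Λ.sub_mem ?_ hx
    have : L x ∈ ⇑L '' (Λ : Set t) := ⟨x, hx, rfl⟩
    rwa [hL] at this
  have hF2 : ∀ x ∈ Λhat, F x ∈ Λhat := by
    intro x hx
    rw [hF]
    refine Λhat.sub_mem ?_ hx
    rw [hΛhat] at hx ⊢
    intro l hl
    have hl' : l ∈ ⇑L '' (Λ : Set t) := by rw [hL]; exact hl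
    obtain ⟨m, hm, rfl⟩ := hl'
    rw [L.inner_map_map]
    exact hx m hm
  obtain ⟨fin1, q, hq, hq0⟩ := comp_hom Λ hspan F hF1 N hN
  obtain ⟨fin2, p, hp, hp0⟩ := comp_hom Λhat hspan' F hF2 Nhat hNhat
  let B : (Λhat.toAddSubgroup.comap F.toAddMonoidHom) →+
      (Λ.toAddSubgroup.comap F.toAddMonoidHom) →+ AddCircle (1:ℝ) :=
    AddMonoidHom.mk' (fun x => AddMonoidHom.mk'
      (fun y => ((⟪(x:t), F (y:t)⟫ : ℝ) : AddCircle (1:ℝ))) (by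
        intro a b
        simp [inner_add_right])) (by
        intro a b
        ext y
        simp [inner_add_left])
  have hB : ∀ x y, B x y = 0 ↔ ∃ n : ℤ, ⟪(x:t), F (y:t)⟫ = (n:ℝ) := by
    intro x y
    change ((⟪(x:t), F (y:t)⟫ : ℝ) : AddCircle (1:ℝ)) = 0 ↔ _
    rw [AddCircle.coe_eq_zero_iff]
    simp [eq_comm]
  have key := duality p hp q hq B ?_ ?_
  · exact ⟨key.1, fin2, fin1, key.2⟩
  · intro x
    rw [hp0, pairing_zero Λ hspan F hF1 hFF Λhat hΛhat]
    exact ⟨fun h y => (hB x y).2 (h y y.2), fun h y hy => (hB x ⟨y, hy⟩).1 (h _)⟩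
  · intro y
    rw [hq0, pairing_zero Λhat hspan' F hF2 hFF Λ hΛ]
    have sw : ∀ x : t, F x ∈ Λhat → F (y:t) ∈ Λ →
        ((∃ n : ℤ, ⟪(y:t), F x⟫ = (n:ℝ)) ↔ ∃ n : ℤ, ⟪x, F (y:t)⟫ = (n:ℝ)) := by
      intro x hx hy
      obtain ⟨m, hm⟩ := (hΛhat _).1 hx _ hy
      have h := hFF x y
      have h3 := real_inner_comm (F x) (y:t)
      have h4 := real_inner_comm (F x) (F (y:t))
      constructor
      · rintro ⟨n, hn⟩
        exact ⟨-n - m, by push_cast; linarith⟩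
      · rintro ⟨n, hn⟩
        exact ⟨-n - m, by push_cast; linarith⟩
    constructor
    · intro h x
      exact (hB x y).2 ((sw x x.2 y.2).1 (h x x.2))
    · intro h x hx
      exact (sw x hx y.2).2 ((hB ⟨x, hx⟩ y).1 (h _))
end
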